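/- Let n ≥ 2, A the Cartan matrix of type B_n, and ι an admissible sequence adapted to A. Then the type B boxes satisfy: (1) B^B_s(j+1) = B^B_s(j) − β_{s+P(j),j} for 1 ≤ j ≤ n−1 and s ≥ 1 − P(j); (2) B^B_s(n̄) = B^B_s(n) − β_{s+P(n),n} for s ≥ 1 − P(n); (3) B^B_s(ovl(j−1)) = B^B_s(j̄) − β_{s+P(j−1)+n−j+1, j−1} for 2 ≤ j ≤ n and s ≥ j − P(j−1) − n. -/

import Mathlib

noncomputable section

/-- The coordinate linear form `x_k` (as a coefficient vector). -/
def xc (k : ℕ) : ℕ → ℚ := fun l => if l = k then 1 else 0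

/-- Cartan matrix of type `A_n`. -/
def cartanA (_n : ℕ) (i j : ℕ) : ℤ :=
  if i = j then 2 else if i + 1 = j ∨ j + 1 = i then -1 else 0

/-- Cartan matrix of type `B_n`. -/
def cartanB (n : ℕ) (i j : ℕ) : ℤ :=
  if i = j then 2
  else if i = n ∧ j = n - 1 then -2
  else if i + 1 = j ∨ j + 1 = i then -1 else 0

/-- Cartan matrix of type `C_n`. -/
def cartanC (n : ℕ) (i j : ℕ) : ℤ :=
  if i = j then 2
  else if i = n - 1 ∧ j = n then -2
  else if i + 1 = j ∨ j + 1 = i then -1 else 0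

/-- Cartan matrix of type `D_n`. -/
def cartanD (n : ℕ) (i j : ℕ) : ℤ :=
  if i = j then 2
  else if (i = n - 1 ∧ j = n) ∨ (i = n ∧ j = n - 1) then 0
  else if (i + 1 = j ∨ j + 1 = i) ∨ (i = n ∧ j = n - 2) ∨ (i = n - 2 ∧ j = n) then -1
  else 0

/-- `ι` (with positions indexed by `k ≥ 1`) takes values in `{1,…,n}`, has no two equal
consecutive entries, and every index occurs infinitely often. -/
def Admissible (n : ℕ) (ι : ℕ → ℕ) : Prop :=
  (∀ k, 1 ≤ k → 1 ≤ ι k ∧ ι k ≤ n) ∧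
  (∀ k, 1 ≤ k → ι k ≠ ι (k + 1)) ∧
  (∀ i, 1 ≤ i → i ≤ n → ∀ N, ∃ k, N ≤ k ∧ ι k = i)

/-- `k^+`: the next position after `k` carrying the same letter. -/
def kplus (ι : ℕ → ℕ) (k : ℕ) : ℕ := sInf {l | k < l ∧ ι l = ι k}

/-- `k^-`: the previous position (`≥ 1`) carrying the same letter, `0` if none. -/
def kminus (ι : ℕ → ℕ) (k : ℕ) : ℕ := sSup {l | 0 < l ∧ l < k ∧ ι l = ι k}

/-- The linear form `β_k` (with `β_0 = 0`). -/
def beta (A : ℕ → ℕ → ℤ) (ι : ℕ → ℕ) (k : ℕ) : ℕ → ℚ :=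
  if k = 0 then 0
  else xc k + (∑ j ∈ Finset.Ioo k (kplus ι k), (A (ι k) (ι j) : ℚ) • xc j) + xc (kplus ι k)

/-- The piecewise-linear operator `S_k`. -/
def Sop (A : ℕ → ℕ → ℤ) (ι : ℕ → ℕ) (k : ℕ) (φ : ℕ → ℚ) : ℕ → ℚ :=
  if 0 < φ k then φ - φ k • beta A ι k
  else φ - φ k • beta A ι (kminus ι k)

/-- Membership in `Ξ_ι`: forms obtained from some `x_{j_0}` by finitely many operators `S_k`. -/
inductive XiMem (A : ℕ → ℕ → ℤ) (ι : ℕ → ℕ) : (ℕ → ℚ) → Prop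
  | base (k : ℕ) (hk : 1 ≤ k) : XiMem A ι (xc k)
  | step (k : ℕ) (hk : 1 ≤ k) (φ : ℕ → ℚ) (h : XiMem A ι φ) : XiMem A ι (Sop A ι k φ)

/-- The set `Ξ_ι`. -/
def Xi (A : ℕ → ℕ → ℤ) (ι : ℕ → ℕ) : Set (ℕ → ℚ) := { φ | XiMem A ι φ }

/-- Forms obtained from a set `g` of generators by finitely many operators `S_k`. -/
inductive XiMemFrom (A : ℕ → ℕ → ℤ) (ι : ℕ → ℕ) (g : Set (ℕ → ℚ)) : (ℕ → ℚ) → Prop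
  | base (φ : ℕ → ℚ) (h : φ ∈ g) : XiMemFrom A ι g φ
  | step (k : ℕ) (hk : 1 ≤ k) (φ : ℕ → ℚ) (h : XiMemFrom A ι g φ) :
      XiMemFrom A ι g (Sop A ι k φ)

/-- `ι` is adapted to the Cartan matrix `A`: for `i ≠ j` with `a_{i,j} ≠ 0`, consecutive
members of the subsequence of `ι` consisting of the letters `i`, `j` are distinct. -/
def Adapted (n : ℕ) (A : ℕ → ℕ → ℤ) (ι : ℕ → ℕ) : Prop :=
  ∀ i j, 1 ≤ i → i ≤ n → 1 ≤ j → j ≤ n → i ≠ j → A i j ≠ 0 →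
    ∀ k l, 1 ≤ k → k < l → (ι k = i ∨ ι k = j) → (ι l = i ∨ ι l = j) →
      (∀ m, k < m → m < l → ι m ≠ i ∧ ι m ≠ j) → ι k ≠ ι l

/-- Position of the first occurrence of the letter `i` in `ι`. -/
def firstOcc (ι : ℕ → ℕ) (i : ℕ) : ℕ := sInf {k | 1 ≤ k ∧ ι k = i}

/-- `p_{i,j} = 1` iff the first occurrence of `i` precedes the first occurrence of `j`. -/
def pval (ι : ℕ → ℕ) (i j : ℕ) : ℕ := if firstOcc ι i < firstOcc ι j then 1 else 0

/-- The function `P(k)` for types A, B, C (and `P(k) = 0` for `k > n`, `k ≤ 1`). -/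
def PABC (ι : ℕ → ℕ) (n k : ℕ) : ℕ :=
  if k ≤ n then ∑ t ∈ Finset.Icc 2 k, pval ι t (t - 1) else 0

/-- The function `P(k)` for type D. -/
def PD (ι : ℕ → ℕ) (n k : ℕ) : ℕ :=
  if k = n then (∑ t ∈ Finset.Icc 2 (n - 2), pval ι t (t - 1)) + pval ι n (n - 2)
  else if k ≤ n then ∑ t ∈ Finset.Icc 2 k, pval ι t (t - 1) else 0

/-- `occPos ι j s`: the position of the `s`-th occurrence of the letter `j` in `ι`
(`0` for `s = 0`). -/
def occPos (ι : ℕ → ℕ) (j : ℕ) : ℕ → ℕ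
  | 0 => 0
  | s + 1 => sInf {k | occPos ι j s < k ∧ ι k = j}

/-- The double-indexed coordinate form `x_{s,j}`, with the conventions
`x_{s,0} = x_{s,n+1} = 0` and `x_{s,j} = 0` for `s ≤ 0`. -/
def xsj (ι : ℕ → ℕ) (n : ℕ) (s : ℤ) (j : ℕ) : ℕ → ℚ :=
  if 1 ≤ s ∧ 1 ≤ j ∧ j ≤ n then xc (occPos ι j s.toNat) else 0

/-- The double-indexed form `β_{s,j}`. -/
def betasj (A : ℕ → ℕ → ℤ) (ι : ℕ → ℕ) (s : ℤ) (j : ℕ) : ℕ → ℚ :=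
  beta A ι (occPos ι j s.toNat)

/-- The double-indexed operator `S_{m,j}`. -/
def Ssj (A : ℕ → ℕ → ℤ) (ι : ℕ → ℕ) (m j : ℕ) (φ : ℕ → ℚ) : ℕ → ℚ :=
  Sop A ι (occPos ι j m) φ

/- Entries of the ordered sets `J_X` are encoded as natural numbers:
an unbarred entry `j ∈ {1,…,n}` is encoded as `j`, a barred entry `j̄` is
encoded as `2n+1-j` (so that `n̄ = n+1, …, 1̄ = 2n` and the total order of
`J_B = J_C` is the numerical order), and the extra symbol `ovl(n+1)` of
types C and D is encoded as `0`. -/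

/-- The box of type A. -/
def boxA (ι : ℕ → ℕ) (n : ℕ) (s : ℤ) (j : ℕ) : ℕ → ℚ :=
  xsj ι n (s + (PABC ι n j : ℤ)) j - xsj ι n (s + (PABC ι n (j - 1) : ℤ) + 1) (j - 1)

/-- The box of type B. -/
def boxB (ι : ℕ → ℕ) (n : ℕ) (s : ℤ) (e : ℕ) : ℕ → ℚ :=
  if e ≤ n then
    xsj ι n (s + (PABC ι n e : ℤ)) e - xsj ι n (s + (PABC ι n (e - 1) : ℤ) + 1) (e - 1)
  else
    xsj ι n (s + (PABC ι n (2 * n - e) : ℤ) + (n : ℤ) - ((2 * n + 1 - e : ℕ) : ℤ) + 1)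
        (2 * n - e)
      - xsj ι n (s + (PABC ι n (2 * n + 1 - e) : ℤ) + (n : ℤ) - ((2 * n + 1 - e : ℕ) : ℤ) + 1)
          (2 * n + 1 - e)

/-- The box of type C (`ovl(n+1)` encoded as `0`). -/
def boxC (ι : ℕ → ℕ) (n : ℕ) (s : ℤ) (e : ℕ) : ℕ → ℚ :=
  if e = 0 then xsj ι n (s + (PABC ι n n : ℤ)) n
  else if e < n then
    xsj ι n (s + (PABC ι n e : ℤ)) e - xsj ι n (s + (PABC ι n (e - 1) : ℤ) + 1) (e - 1)
  else if e = n then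
    (2 : ℚ) • xsj ι n (s + (PABC ι n n : ℤ)) n
      - xsj ι n (s + (PABC ι n (n - 1) : ℤ) + 1) (n - 1)
  else if e = n + 1 then
    xsj ι n (s + (PABC ι n (n - 1) : ℤ) + 1) (n - 1)
      - (2 : ℚ) • xsj ι n (s + (PABC ι n n : ℤ) + 1) n
  else
    xsj ι n (s + (PABC ι n (2 * n - e) : ℤ) + (n : ℤ) - ((2 * n + 1 - e : ℕ) : ℤ) + 1)
        (2 * n - e)
      - xsj ι n (s + (PABC ι n (2 * n + 1 - e) : ℤ) + (n : ℤ) - ((2 * n + 1 - e : ℕ) : ℤ) + 1)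
          (2 * n + 1 - e)

/-- The box of type D (`ovl(n+1)` encoded as `0`, `n̄` as `n+1`, `ovl(n-1)` as `n+2`). -/
def boxD (ι : ℕ → ℕ) (n : ℕ) (s : ℤ) (e : ℕ) : ℕ → ℚ :=
  if e = 0 then xsj ι n (s + (PD ι n n : ℤ)) n
  else if e ≤ n - 2 then
    xsj ι n (s + (PD ι n e : ℤ)) e - xsj ι n (s + (PD ι n (e - 1) : ℤ) + 1) (e - 1)
  else if e = n - 1 then
    xsj ι n (s + (PD ι n (n - 1) : ℤ)) (n - 1) + xsj ι n (s + (PD ι n n : ℤ)) n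
      - xsj ι n (s + (PD ι n (n - 2) : ℤ) + 1) (n - 2)
  else if e = n then
    xsj ι n (s + (PD ι n n : ℤ)) n - xsj ι n (s + (PD ι n (n - 1) : ℤ) + 1) (n - 1)
  else if e = n + 1 then
    xsj ι n (s + (PD ι n (n - 1) : ℤ)) (n - 1) - xsj ι n (s + (PD ι n n : ℤ) + 1) n
  else if e = n + 2 then
    xsj ι n (s + (PD ι n (n - 2) : ℤ) + 1) (n - 2)
      - xsj ι n (s + (PD ι n (n - 1) : ℤ) + 1) (n - 1)
      - xsj ι n (s + (PD ι n n : ℤ) + 1) n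
  else
    xsj ι n (s + (PD ι n (2 * n - e) : ℤ) + (n : ℤ) - ((2 * n + 1 - e : ℕ) : ℤ)) (2 * n - e)
      - xsj ι n (s + (PD ι n (2 * n + 1 - e) : ℤ) + (n : ℤ) - ((2 * n + 1 - e : ℕ) : ℤ))
          (2 * n + 1 - e)

/-- The column tableau `[j_1,…,j_k]_s = Σ_{i=1}^k box_{s+k-i}(j_i)`. -/
def tab (box : ℤ → ℕ → ℕ → ℚ) (s : ℤ) (k : ℕ) (j : ℕ → ℕ) : ℕ → ℚ :=
  ∑ i ∈ Finset.Icc 1 k, box (s + (k : ℤ) - (i : ℤ)) (j i)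

/-- The set `Tab_{A,ι}`. -/
def TabA (ι : ℕ → ℕ) (n : ℕ) : Set (ℕ → ℚ) :=
  { T | ∃ (k : ℕ) (s : ℤ) (j : ℕ → ℕ),
      1 ≤ k ∧ k ≤ n ∧
      (∀ i, 1 ≤ i → i ≤ k → 1 ≤ j i ∧ j i ≤ n + 1) ∧
      (∀ i, 1 ≤ i → i < k → j i < j (i + 1)) ∧
      1 - (PABC ι n k : ℤ) ≤ s ∧
      T = tab (boxA ι n) s k j }

/-- `|·|` on encoded entries of `J_B = J_C`. -/
def absJ (n e : ℕ) : ℕ := if e ≤ n then e else 2 * n + 1 - e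

/-- The set `Tab_{B,ι}`. -/
def TabB (ι : ℕ → ℕ) (n : ℕ) : Set (ℕ → ℚ) :=
  { T | ∃ (k : ℕ) (s : ℤ) (j : ℕ → ℕ),
      1 ≤ k ∧ k ≤ n ∧
      (∀ i, 1 ≤ i → i ≤ k → 1 ≤ j i ∧ j i ≤ 2 * n) ∧
      (∀ i, 1 ≤ i → i < k → j i < j (i + 1)) ∧
      (k = n → ∀ l m, 1 ≤ l → l < m → m ≤ k → absJ n (j l) ≠ absJ n (j m)) ∧
      1 - (PABC ι n k : ℤ) ≤ s ∧
      T = tab (boxB ι n) s k j }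

/-- Defining conditions of `Tab_{C,ι}` on the data `(k,s,j)`. -/
def TabCcond (ι : ℕ → ℕ) (n : ℕ) (k : ℕ) (s : ℤ) (j : ℕ → ℕ) : Prop :=
  (1 ≤ k ∧ k ≤ n - 1 ∧
    (∀ i, 1 ≤ i → i ≤ k → 1 ≤ j i ∧ j i ≤ 2 * n) ∧
    (∀ i, 1 ≤ i → i < k → j i < j (i + 1)) ∧
    1 - (PABC ι n k : ℤ) ≤ s)
  ∨
  (j 1 = 0 ∧ 1 ≤ k ∧ k ≤ n + 1 ∧
    (∀ i, 2 ≤ i → i ≤ k → n + 1 ≤ j i ∧ j i ≤ 2 * n) ∧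
    (∀ i, 2 ≤ i → i < k → j i < j (i + 1)) ∧
    1 - (PABC ι n n : ℤ) ≤ s)

/-- The set `Tab_{C,ι}`. -/
def TabC (ι : ℕ → ℕ) (n : ℕ) : Set (ℕ → ℚ) :=
  { T | ∃ k s j, TabCcond ι n k s j ∧ T = tab (boxC ι n) s k j }

/-- The partial order on (encoded) `J_D`: `a ≤ b` iff `a = b`, or `a < b` numerically and
`(a,b)` is not the incomparable pair `(n, n̄)`. -/
def leD (n a b : ℕ) : Prop := a = b ∨ (a < b ∧ ¬(a = n ∧ b = n + 1))

/-- Defining conditions of `Tab_{D,ι}` on the data `(k,s,j)`. -/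
def TabDcond (ι : ℕ → ℕ) (n : ℕ) (k : ℕ) (s : ℤ) (j : ℕ → ℕ) : Prop :=
  (1 ≤ k ∧ k ≤ n - 2 ∧
    (∀ i, 1 ≤ i → i ≤ k → 1 ≤ j i ∧ j i ≤ 2 * n) ∧
    (∀ i, 1 ≤ i → i < k → ¬ leD n (j (i + 1)) (j i)) ∧
    1 - (PD ι n k : ℤ) ≤ s)
  ∨
  (j 1 = 0 ∧ 1 ≤ k ∧ k ≤ n + 1 ∧
    (∀ i, 2 ≤ i → i ≤ k → n + 1 ≤ j i ∧ j i ≤ 2 * n) ∧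
    (∀ i, 2 ≤ i → i < k → j i < j (i + 1)) ∧
    (k % 2 = 0 → 1 - (PD ι n (n - 1) : ℤ) ≤ s) ∧
    (k % 2 = 1 → 1 - (PD ι n n : ℤ) ≤ s))

/-- The set `Tab_{D,ι}`. -/
def TabD (ι : ℕ → ℕ) (n : ℕ) : Set (ℕ → ℚ) :=
  { T | ∃ k s j, TabDcond ι n k s j ∧ T = tab (boxD ι n) s k j }

end

/-! If the letters `i` and `j` alternate in `ι`, then strictly between the `m`-th and the
`(m+1)`-st occurrence of `j` there is exactly one `i`, and it is the `(m + p_{i,j})`-th one.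
Collecting the terms of `β` by letter therefore gives, for `ι` adapted to any matrix `A`,
`β_{s,j} = x_{s,j} + Σ_{i ≠ j} a_{j,i} x_{s + p_{i,j}, i} + x_{s+1,j}`.
When `A` is tridiagonal only `i = j ± 1` contribute, and since `P(j+1) = P(j) + p_{j+1,j}` and
`p_{j-1,j} = 1 - p_{j,j-1}`, replacing `s` by `s + P(j)` turns the neighbouring terms into
`x_{s + P(j-1) + 1, j-1}` and `x_{s + P(j+1), j+1}`: these are the coordinates that occur in the
boxes, and each relation is a cancellation. -/

section Occurrences

variable {ι : ℕ → ℕ} {i j : ℕ}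

theorem occPos_succ_le {m t : ℕ} (hmt : occPos ι j m < t) (ht : ι t = j) :
    occPos ι j (m + 1) ≤ t :=
  Nat.sInf_le ⟨hmt, ht⟩

theorem occPos_lt_succ_and_apply (hj : ∃ᶠ k in Filter.atTop, ι k = j) (m : ℕ) :
    occPos ι j m < occPos ι j (m + 1) ∧ ι (occPos ι j (m + 1)) = j :=
  Nat.sInf_mem (s := {k | occPos ι j m < k ∧ ι k = j})
    (Filter.frequently_atTop.mp hj (occPos ι j m + 1))

theorem occPos_lt_succ (hj : ∃ᶠ k in Filter.atTop, ι k = j) (m : ℕ) :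
    occPos ι j m < occPos ι j (m + 1) :=
  (occPos_lt_succ_and_apply hj m).1

theorem occPos_succ_pos (hj : ∃ᶠ k in Filter.atTop, ι k = j) (m : ℕ) : 0 < occPos ι j (m + 1) :=
  Nat.zero_lt_of_lt (occPos_lt_succ hj m)

theorem apply_occPos_succ (hj : ∃ᶠ k in Filter.atTop, ι k = j) (m : ℕ) :
    ι (occPos ι j (m + 1)) = j :=
  (occPos_lt_succ_and_apply hj m).2

theorem apply_ne_of_mem_Ioo_occPos {m t : ℕ}
    (ht : t ∈ Finset.Ioo (occPos ι j m) (occPos ι j (m + 1))) : ι t ≠ j := fun h ↦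
  (occPos_succ_le (Finset.mem_Ioo.mp ht).1 h).not_gt (Finset.mem_Ioo.mp ht).2

theorem eq_occPos_succ {m t : ℕ} (hmt : occPos ι j m < t) (htm : t < occPos ι j (m + 2))
    (ht : ι t = j) : t = occPos ι j (m + 1) := by
  refine (occPos_succ_le hmt ht).eq_of_not_lt' fun hlt ↦ ?_
  exact (occPos_succ_le hlt ht).not_gt htm

theorem kplus_occPos_succ (hj : ∃ᶠ k in Filter.atTop, ι k = j) (m : ℕ) :
    kplus ι (occPos ι j (m + 1)) = occPos ι j (m + 2) := by
  rw [kplus, apply_occPos_succ hj]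
  rfl

theorem firstOcc_eq_occPos_one (ι : ℕ → ℕ) (j : ℕ) : firstOcc ι j = occPos ι j 1 := rfl

theorem firstOcc_ne (hi : ∃ᶠ k in Filter.atTop, ι k = i) (hj : ∃ᶠ k in Filter.atTop, ι k = j)
    (hij : i ≠ j) : firstOcc ι i ≠ firstOcc ι j := by
  simp only [firstOcc_eq_occPos_one]
  intro h
  exact hij (by rw [← apply_occPos_succ hi 0, ← apply_occPos_succ hj 0, h])

theorem pval_add_pval_swap (h : firstOcc ι i ≠ firstOcc ι j) : pval ι i j + pval ι j i = 1 := by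
  grind [pval]

end Occurrences

section Alternation

/-- The letters `i` and `j` alternate in `ι`: consecutive members of the subsequence of all
occurrences of `i` and `j` are distinct. This is the condition that `Adapted` imposes on each pair
of letters joined by a nonzero matrix entry. -/
def Alternate (ι : ℕ → ℕ) (i j : ℕ) : Prop :=
  ∀ k l, 1 ≤ k → k < l → (ι k = i ∨ ι k = j) → (ι l = i ∨ ι l = j) →
    (∀ m, k < m → m < l → ι m ≠ i ∧ ι m ≠ j) → ι k ≠ ι l

variable {ι : ℕ → ℕ} {i j : ℕ}

theorem Alternate.symm (h : Alternate ι i j) : Alternate ι j i :=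
  fun k l hk hkl hik hil hm ↦ h k l hk hkl hik.symm hil.symm fun m hkm hml ↦ (hm m hkm hml).symm

theorem Alternate.exists_between (h : Alternate ι i j) (hi : ∃ᶠ k in Filter.atTop, ι k = i)
    (m : ℕ) : ∃ r, occPos ι i (m + 1) < r ∧ r < occPos ι i (m + 2) ∧ ι r = j := by
  by_contra! hno
  refine h _ _ (occPos_succ_pos hi m) (occPos_lt_succ hi (m + 1)) (.inl (apply_occPos_succ hi m))
    (.inl (apply_occPos_succ hi (m + 1))) (fun r hmr hrm ↦ ⟨?_, hno r hmr hrm⟩)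
    ((apply_occPos_succ hi m).trans (apply_occPos_succ hi (m + 1)).symm)
  exact apply_ne_of_mem_Ioo_occPos (Finset.mem_Ioo.mpr ⟨hmr, hrm⟩)

theorem Alternate.occPos_succ_lt_succ (h : Alternate ι i j)
    (hj : ∃ᶠ k in Filter.atTop, ι k = j) {a b : ℕ} (hab : occPos ι i a < occPos ι j (b + 1)) :
    occPos ι i (a + 1) < occPos ι j (b + 2) := by
  obtain ⟨r, hbr, hrb, hr⟩ := h.symm.exists_between hj b
  exact (occPos_succ_le (hab.trans hbr) hr).trans_lt hrb

theorem Alternate.occPos_pval_add_lt (h : Alternate ι i j)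
    (hj : ∃ᶠ k in Filter.atTop, ι k = j) (m : ℕ) :
    occPos ι i (pval ι i j + m) < occPos ι j (m + 1) := by
  induction m with
  | zero =>
    by_cases hfirst : firstOcc ι i < firstOcc ι j
    · rwa [pval, if_pos hfirst]
    · rw [pval, if_neg hfirst]
      exact occPos_succ_pos hj 0
  | succ m ih => exact h.occPos_succ_lt_succ hj ih

theorem Alternate.occPos_lt_pval_add (h : Alternate ι i j)
    (hi : ∃ᶠ k in Filter.atTop, ι k = i) (hj : ∃ᶠ k in Filter.atTop, ι k = j) (hij : i ≠ j)
    (m : ℕ) : occPos ι j (m + 1) < occPos ι i (pval ι i j + m + 1) := by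
  induction m with
  | zero =>
    by_cases hfirst : firstOcc ι i < firstOcc ι j
    · rw [pval, if_pos hfirst]
      exact h.symm.occPos_succ_lt_succ hi (occPos_succ_pos hi 0)
    · rw [pval, if_neg hfirst]
      exact (firstOcc_ne hi hj hij).lt_of_le' (not_lt.mp hfirst)
  | succ m ih => exact h.symm.occPos_succ_lt_succ hi ih

theorem Alternate.filter_Ioo_occPos (h : Alternate ι i j)
    (hi : ∃ᶠ k in Filter.atTop, ι k = i) (hj : ∃ᶠ k in Filter.atTop, ι k = j) (hij : i ≠ j)
    (m : ℕ) : {t ∈ Finset.Ioo (occPos ι j (m + 1)) (occPos ι j (m + 2)) | ι t = i}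
      = {occPos ι i (pval ι i j + m + 1)} := by
  ext t
  simp only [Finset.mem_filter, Finset.mem_Ioo, Finset.mem_singleton]
  constructor
  · rintro ⟨⟨hmt, htm⟩, ht⟩
    exact eq_occPos_succ ((h.occPos_pval_add_lt hj m).trans hmt)
      (htm.trans (h.occPos_lt_pval_add hi hj hij (m + 1))) ht
  · rintro rfl
    exact ⟨⟨h.occPos_lt_pval_add hi hj hij m, h.occPos_pval_add_lt hj (m + 1)⟩,
      apply_occPos_succ hi _⟩

end Alternation

section BetaForms

theorem Admissible.frequently_eq {n : ℕ} {ι : ℕ → ℕ} (hadm : Admissible n ι) {j : ℕ}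
    (hj : j ∈ Finset.Icc 1 n) : ∃ᶠ k in Filter.atTop, ι k = j :=
  Filter.frequently_atTop.mpr
    (hadm.2.2 j (Finset.mem_Icc.mp hj).1 (Finset.mem_Icc.mp hj).2)

theorem xsj_of_notMem {n j : ℕ} (hj : j ∉ Finset.Icc 1 n) (ι : ℕ → ℕ) (s : ℤ) :
    xsj ι n s j = 0 :=
  if_neg fun h ↦ hj (Finset.mem_Icc.mpr h.2)

theorem xsj_natCast_succ {n j : ℕ} (hj : j ∈ Finset.Icc 1 n) (ι : ℕ → ℕ) (m : ℕ) :
    xsj ι n (m + 1 : ℕ) j = xc (occPos ι j (m + 1)) := by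
  rw [xsj, if_pos ⟨by omega, Finset.mem_Icc.mp hj⟩, Int.toNat_natCast]

theorem PABC_succ {n k : ℕ} (hk : 1 ≤ k) (hkn : k < n) (ι : ℕ → ℕ) :
    PABC ι n (k + 1) = PABC ι n k + pval ι (k + 1) k := by
  rw [PABC, PABC, if_pos (Nat.succ_le_of_lt hkn), if_pos hkn.le,
    Finset.sum_Icc_succ_top (by omega), Nat.add_sub_cancel]

variable {n : ℕ} {A : ℕ → ℕ → ℤ} {ι : ℕ → ℕ} {j : ℕ} {s : ℤ}
  (hadm : Admissible n ι) (hadap : Adapted n A ι) (hj : j ∈ Finset.Icc 1 n)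
include hadm hadap hj

theorem sum_Ioo_occPos_smul_xc (m : ℕ) :
    ∑ t ∈ Finset.Ioo (occPos ι j (m + 1)) (occPos ι j (m + 2)), (A j (ι t) : ℚ) • xc t
      = ∑ i ∈ (Finset.Icc 1 n).erase j, (A j i : ℚ) • xc (occPos ι i (pval ι i j + m + 1)) := by
  have hmaps : ∀ t ∈ Finset.Ioo (occPos ι j (m + 1)) (occPos ι j (m + 2)),
      ι t ∈ (Finset.Icc 1 n).erase j := fun t ht ↦
    Finset.mem_erase.mpr ⟨apply_ne_of_mem_Ioo_occPos ht,
      Finset.mem_Icc.mpr (hadm.1 t (Nat.one_le_of_lt (Finset.mem_Ioo.mp ht).1))⟩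
  rw [← Finset.sum_fiberwise_of_maps_to hmaps]
  refine Finset.sum_congr rfl fun i hi ↦ ?_
  obtain ⟨hij, hin⟩ := Finset.mem_erase.mp hi
  have hletter : ∀ t ∈ {t ∈ Finset.Ioo (occPos ι j (m + 1)) (occPos ι j (m + 2)) | ι t = i},
      (A j (ι t) : ℚ) • xc t = (A j i : ℚ) • xc t := fun t ht ↦ by
    rw [(Finset.mem_filter.mp ht).2]
  rw [Finset.sum_congr rfl hletter]
  by_cases hA : A j i = 0
  · simp only [hA, Int.cast_zero, zero_smul, Finset.sum_const_zero]
  · have halt : Alternate ι j i :=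
      hadap j i (Finset.mem_Icc.mp hj).1 (Finset.mem_Icc.mp hj).2 (Finset.mem_Icc.mp hin).1
        (Finset.mem_Icc.mp hin).2 hij.symm hA
    rw [halt.symm.filter_Ioo_occPos (hadm.frequently_eq hin) (hadm.frequently_eq hj) hij,
      Finset.sum_singleton]

theorem betasj_eq_sum (hs : 1 ≤ s) :
    betasj A ι s j = xsj ι n s j
      + ∑ i ∈ (Finset.Icc 1 n).erase j, (A j i : ℚ) • xsj ι n (s + pval ι i j) i
      + xsj ι n (s + 1) j := by
  obtain ⟨m, rfl⟩ : ∃ m : ℕ, s = (m + 1 : ℕ) := ⟨s.toNat - 1, by omega⟩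
  have hfreq := hadm.frequently_eq hj
  have hneighbour : ∀ i ∈ (Finset.Icc 1 n).erase j,
      (A j i : ℚ) • xsj ι n ((m + 1 : ℕ) + pval ι i j) i
        = (A j i : ℚ) • xc (occPos ι i (pval ι i j + m + 1)) := fun i hi ↦ by
    rw [← xsj_natCast_succ (Finset.mem_of_mem_erase hi), ← Nat.cast_add, add_comm, add_assoc]
  rw [Finset.sum_congr rfl hneighbour, ← sum_Ioo_occPos_smul_xc hadm hadap hj, ← Nat.cast_succ,
    xsj_natCast_succ hj, xsj_natCast_succ hj, betasj, Int.toNat_natCast, beta,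
    if_neg (occPos_succ_pos hfreq m).ne', kplus_occPos_succ hfreq, apply_occPos_succ hfreq]

theorem betasj_of_tridiagonal (hA : ∀ i, A j i ≠ 0 → i ≤ j + 1 ∧ j ≤ i + 1) (hs : 1 ≤ s) :
    betasj A ι s j = xsj ι n s j
      + ((A j (j - 1) : ℚ) • xsj ι n (s + pval ι (j - 1) j) (j - 1)
        + (A j (j + 1) : ℚ) • xsj ι n (s + pval ι (j + 1) j) (j + 1))
      + xsj ι n (s + 1) j := by
  have hj1 := (Finset.mem_Icc.mp hj).1
  rw [betasj_eq_sum hadm hadap hj hs, ← Finset.sum_pair (by omega : j - 1 ≠ j + 1)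
    (f := fun i ↦ (A j i : ℚ) • xsj ι n (s + pval ι i j) i)]
  congr 2
  refine Finset.sum_congr_of_eq_on_inter (fun i hi hi' ↦ ?_) (fun i hi hi' ↦ ?_) fun _ _ _ ↦ rfl
  · have hzero : A j i = 0 := by
      by_contra hne
      have := hA i hne
      simp only [Finset.mem_erase, Finset.mem_insert, Finset.mem_singleton] at hi hi'
      omega
    rw [hzero, Int.cast_zero, zero_smul]
  · have hout : i ∉ Finset.Icc 1 n := fun hin ↦ hi' <| Finset.mem_erase.mpr
      ⟨by simp only [Finset.mem_insert, Finset.mem_singleton] at hi; omega, hin⟩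
    rw [xsj_of_notMem hout, smul_zero]

theorem betasj_add_PABC (hA : ∀ i, A j i ≠ 0 → i ≤ j + 1 ∧ j ≤ i + 1)
    (hs : 1 ≤ s + PABC ι n j) :
    betasj A ι (s + PABC ι n j) j = xsj ι n (s + PABC ι n j) j
      + ((A j (j - 1) : ℚ) • xsj ι n (s + PABC ι n (j - 1) + 1) (j - 1)
        + (A j (j + 1) : ℚ) • xsj ι n (s + PABC ι n (j + 1)) (j + 1))
      + xsj ι n (s + PABC ι n j + 1) j := by
  have hlower : xsj ι n (s + PABC ι n j + pval ι (j - 1) j) (j - 1)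
      = xsj ι n (s + PABC ι n (j - 1) + 1) (j - 1) := by
    by_cases hpred : j - 1 ∈ Finset.Icc 1 n
    · obtain ⟨i, rfl⟩ : ∃ i, j = i + 1 := ⟨j - 1, by grind⟩
      rw [Nat.add_sub_cancel] at hpred ⊢
      have hswap := pval_add_pval_swap <| firstOcc_ne (hadm.frequently_eq hpred)
        (hadm.frequently_eq hj) i.lt_succ_self.ne
      have hP := PABC_succ (Finset.mem_Icc.mp hpred).1 (Finset.mem_Icc.mp hj).2 ι
      congr 1
      omega
    · rw [xsj_of_notMem hpred, xsj_of_notMem hpred]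
  have hupper : xsj ι n (s + PABC ι n j + pval ι (j + 1) j) (j + 1)
      = xsj ι n (s + PABC ι n (j + 1)) (j + 1) := by
    by_cases hsucc : j + 1 ∈ Finset.Icc 1 n
    · rw [PABC_succ (Finset.mem_Icc.mp hj).1 (Finset.mem_Icc.mp hsucc).2, Nat.cast_add, add_assoc]
    · rw [xsj_of_notMem hsucc, xsj_of_notMem hsucc]
  rw [betasj_of_tridiagonal hadm hadap hj hA hs, hlower, hupper]

end BetaForms

section TypeB

theorem cartanB_tridiagonal {n i j : ℕ} (h : cartanB n i j ≠ 0) : j ≤ i + 1 ∧ i ≤ j + 1 := by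
  grind [cartanB]

theorem cartanB_self_succ (n j : ℕ) : cartanB n j (j + 1) = -1 := by
  grind [cartanB]

theorem cartanB_self_pred {n j : ℕ} (hj : 1 ≤ j) (hjn : j < n) : cartanB n j (j - 1) = -1 := by
  grind [cartanB]

theorem cartanB_last {n : ℕ} (hn : 1 ≤ n) : cartanB n n (n - 1) = -2 := by
  grind [cartanB]

theorem boxB_of_le {n e : ℕ} (he : e ≤ n) (ι : ℕ → ℕ) (s : ℤ) :
    boxB ι n s e
      = xsj ι n (s + PABC ι n e) e - xsj ι n (s + PABC ι n (e - 1) + 1) (e - 1) :=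
  if_pos he

-- The arguments are grouped as `(s + n - j) + P(·)`, to match `betasj_add_PABC`.
theorem boxB_bar {n j : ℕ} (hj : j ≤ n) (ι : ℕ → ℕ) (s : ℤ) :
    boxB ι n s (2 * n + 1 - j)
      = xsj ι n (s + n - j + PABC ι n (j - 1) + 1) (j - 1)
        - xsj ι n (s + n - j + PABC ι n j + 1) j := by
  have hpred : 2 * n - (2 * n + 1 - j) = j - 1 := by omega
  have hself : 2 * n + 1 - (2 * n + 1 - j) = j := by omega
  rw [boxB, if_neg (by omega), hpred, hself]
  congr 2 <;> ring

variable {n : ℕ} {ι : ℕ → ℕ} {s : ℤ}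
  (hadm : Admissible n ι) (hadap : Adapted n (cartanB n) ι)
include hadm hadap

theorem betasj_cartanB_of_lt {j : ℕ} (hj : 1 ≤ j) (hjn : j < n) (hs : 1 ≤ s + PABC ι n j) :
    betasj (cartanB n) ι (s + PABC ι n j) j
      = xsj ι n (s + PABC ι n j) j - xsj ι n (s + PABC ι n (j - 1) + 1) (j - 1)
        - xsj ι n (s + PABC ι n (j + 1)) (j + 1) + xsj ι n (s + PABC ι n j + 1) j := by
  rw [betasj_add_PABC hadm hadap (Finset.mem_Icc.mpr ⟨hj, hjn.le⟩)
    (fun _ ↦ cartanB_tridiagonal) hs, cartanB_self_pred hj hjn, cartanB_self_succ]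
  push_cast
  module

theorem betasj_cartanB_last (hn : 1 ≤ n) (hs : 1 ≤ s + PABC ι n n) :
    betasj (cartanB n) ι (s + PABC ι n n) n
      = xsj ι n (s + PABC ι n n) n - (2 : ℚ) • xsj ι n (s + PABC ι n (n - 1) + 1) (n - 1)
        + xsj ι n (s + PABC ι n n + 1) n := by
  rw [betasj_add_PABC hadm hadap (Finset.mem_Icc.mpr ⟨hn, le_rfl⟩)
    (fun _ ↦ cartanB_tridiagonal) hs, cartanB_last hn,
    xsj_of_notMem (j := n + 1) (by simp only [Finset.mem_Icc]; omega)]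
  push_cast
  module

end TypeB

/-- Lemma 3.3 (ii): the type B box relations (barred entries `j̄` are encoded as `2n+1-j`). -/
theorem boxB_rel (n : ℕ) (hn : 2 ≤ n) (ι : ℕ → ℕ)
    (hadm : Admissible n ι) (hadap : Adapted n (cartanB n) ι) :
    (∀ (j : ℕ) (s : ℤ), 1 ≤ j → j ≤ n - 1 → 1 - (PABC ι n j : ℤ) ≤ s →
      boxB ι n s (j + 1) =
        boxB ι n s j - betasj (cartanB n) ι (s + (PABC ι n j : ℤ)) j) ∧
    (∀ s : ℤ, 1 - (PABC ι n n : ℤ) ≤ s →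
      boxB ι n s (n + 1) =
        boxB ι n s n - betasj (cartanB n) ι (s + (PABC ι n n : ℤ)) n) ∧
    (∀ (j : ℕ) (s : ℤ), 2 ≤ j → j ≤ n → (j : ℤ) - (PABC ι n (j - 1) : ℤ) - (n : ℤ) ≤ s →
      boxB ι n s (2 * n + 2 - j) =
        boxB ι n s (2 * n + 1 - j)
          - betasj (cartanB n) ι
              (s + (PABC ι n (j - 1) : ℤ) + (n : ℤ) - (j : ℤ) + 1) (j - 1)) := by
  refine ⟨fun j s hj hjn hs ↦ ?_, fun s hs ↦ ?_, fun j s hj hjn hs ↦ ?_⟩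
  · rw [boxB_of_le (by omega), boxB_of_le (by omega), Nat.add_sub_cancel,
      betasj_cartanB_of_lt hadm hadap hj (by omega) (by omega)]
    abel
  · have hbar : n + 1 = 2 * n + 1 - n := by omega
    rw [hbar, boxB_bar le_rfl, boxB_of_le le_rfl, add_sub_cancel_right,
      betasj_cartanB_last hadm hadap (by omega) (by omega)]
    module
  · obtain ⟨i, rfl⟩ : ∃ i, j = i + 1 := ⟨j - 1, by omega⟩
    have hbar : 2 * n + 2 - (i + 1) = 2 * n + 1 - i := by omega
    have hindex : s + (PABC ι n i : ℤ) + n - (i + 1 : ℕ) + 1 = s + n - i + PABC ι n i := by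
      omega
    have hshift (p : ℤ) : s + n - (i + 1 : ℕ) + p + 1 = s + n - i + p := by omega
    rw [Nat.add_sub_cancel] at hs ⊢
    rw [hbar, boxB_bar (by omega), boxB_bar hjn, Nat.add_sub_cancel, hindex, hshift, hshift,
      betasj_cartanB_of_lt hadm hadap (by omega) (by omega) (by omega)]
    abel
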